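/- Let f : ℝⁿ → ℝ, let ε > 0, and let r : ℝⁿ → ℝ be convex, symmetric with respect to each variable, i.e., r(x − 2xᵢeᵢ) = r(x) for all x ∈ ℝⁿ and all i, and increasing on the positive orthant, i.e., r(x₀ + γeᵢ) ≥ r(x₀) for all x₀ ∈ ℝⁿ with x₀ ≥ 0, all γ ≥ 0, and all i. Define g(y,z) = f(y − z) + r(y + z) + ε·Σᵢ(yᵢ + zᵢ). If (y*, z*) minimizes g over the set {(y,z) : y ≥ 0, z ≥ 0}, then yᵢ* zᵢ* = 0 for every i = 1,…,n. -/

import Mathlib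

/-!
Subtracting the same amount `m` from `yᵢ` and `zᵢ` leaves `y - z` unchanged, does not increase
`r (y + z)`, and lowers the linear penalty by `2εm`. At a minimizer no such move with `m > 0` can
stay in the nonnegative orthant, so `min yᵢ zᵢ = 0`.
-/

section SplitObjective

variable {ι 𝕜 : Type*}

theorem single_le_of_nonneg [Zero 𝕜] [Preorder 𝕜] [DecidableEq ι] {u : ι → 𝕜} (hu : 0 ≤ u)
    {i : ι} {m : 𝕜} (hm : m ≤ u i) : Pi.single i m ≤ u :=
  update_le_iff.2 ⟨hm, fun j _ => hu j⟩

theorem apply_sub_single_add_sub_single_le [AddCommGroup 𝕜] [PartialOrder 𝕜]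
    [IsOrderedAddMonoid 𝕜] [DecidableEq ι] {β : Type*} [LE β] {r : (ι → 𝕜) → β} {i : ι}
    (hr : ∀ x, 0 ≤ x → ∀ γ, 0 ≤ γ → r x ≤ r (x + Pi.single i γ)) {y z : ι → 𝕜} {m : 𝕜}
    (hm : 0 ≤ m) (hy : Pi.single i m ≤ y) (hz : Pi.single i m ≤ z) :
    r (y - Pi.single i m + (z - Pi.single i m)) ≤ r (y + z) := by
  have hsum : y - Pi.single i m + (z - Pi.single i m) + Pi.single i (m + m) = y + z := by
    rw [Pi.single_add]
    abel
  rw [← hsum]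
  exact hr _ (add_nonneg (sub_nonneg.2 hy) (sub_nonneg.2 hz)) _ (add_nonneg hm hm)

variable [Fintype ι] [CommRing 𝕜]

/-- The penalized objective `f (y - z) + r (y + z) + ε ∑ᵢ (yᵢ + zᵢ)`, in which the variable `x`
of `f x` is split as `y - z`. It is defined for all `y` and `z`; the constraints `0 ≤ y` and
`0 ≤ z` are imposed separately. -/
def splitObjective (f r : (ι → 𝕜) → 𝕜) (ε : 𝕜) (y z : ι → 𝕜) : 𝕜 :=
  f (y - z) + r (y + z) + ε * ∑ i, (y i + z i)

theorem splitObjective_sub_sub_add_le [PartialOrder 𝕜] [IsOrderedAddMonoid 𝕜]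
    {r : (ι → 𝕜) → 𝕜} {y z v : ι → 𝕜} (hr : r (y - v + (z - v)) ≤ r (y + z))
    (f : (ι → 𝕜) → 𝕜) (ε : 𝕜) :
    splitObjective f r ε (y - v) (z - v) + 2 * (ε * ∑ i, v i) ≤ splitObjective f r ε y z := by
  calc splitObjective f r ε (y - v) (z - v) + 2 * (ε * ∑ i, v i)
      = f (y - z) + r (y - v + (z - v)) + ε * ∑ i, (y i + z i) := by
        simp only [splitObjective, sub_sub_sub_cancel_right, Pi.sub_apply,
          Finset.sum_add_distrib, Finset.sum_sub_distrib]
        ring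
    _ ≤ splitObjective f r ε y z := by
        unfold splitObjective
        gcongr

theorem stmt_5_general [LinearOrder 𝕜] [IsStrictOrderedRing 𝕜] [DecidableEq ι]
    {f r : (ι → 𝕜) → 𝕜} {ε : 𝕜} (hε : 0 < ε)
    (hr : ∀ x, 0 ≤ x → ∀ γ, 0 ≤ γ → ∀ i, r x ≤ r (x + Pi.single i γ))
    {y z : ι → 𝕜} (hy : 0 ≤ y) (hz : 0 ≤ z)
    (hmin : ∀ y' z', 0 ≤ y' → 0 ≤ z' → splitObjective f r ε y z ≤ splitObjective f r ε y' z')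
    (i : ι) : y i * z i = 0 := by
  by_contra hne
  have hyi : 0 < y i := (hy i).lt_of_ne' (left_ne_zero_of_mul hne)
  have hzi : 0 < z i := (hz i).lt_of_ne' (right_ne_zero_of_mul hne)
  set m := min (y i) (z i)
  have hm : 0 < m := lt_min hyi hzi
  have hmy : Pi.single i m ≤ y := single_le_of_nonneg hy (min_le_left _ _)
  have hmz : Pi.single i m ≤ z := single_le_of_nonneg hz (min_le_right _ _)
  have hdecrease := splitObjective_sub_sub_add_le
    (apply_sub_single_add_sub_single_le (fun x hx γ hγ => hr x hx γ hγ i) hm.le hmy hmz) f ε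
  rw [Fintype.sum_pi_single'] at hdecrease
  have hminimal := hmin _ _ (sub_nonneg.2 hmy) (sub_nonneg.2 hmz)
  linarith [mul_pos hε hm]

end SplitObjective

/-- Lemma 2 (complementarity part): let `r : ℝⁿ → ℝ` be convex, symmetric with
respect to each variable (`r(x - 2xᵢeᵢ) = r(x)`), and increasing on the positive
orthant (`r(x₀ + γeᵢ) ≥ r(x₀)` for `x₀ ≥ 0`, `γ ≥ 0`). If `(y*, z*)` minimizes
`g(y,z) = f(y-z) + r(y+z) + ε·Σᵢ(yᵢ+zᵢ)` over `{(y,z) : y ≥ 0, z ≥ 0}`,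
then `yᵢ* zᵢ* = 0` for all `i`. -/
theorem stmt_5 (n : ℕ) (f : (Fin n → ℝ) → ℝ) (ε : ℝ) (hε : 0 < ε)
    (r : (Fin n → ℝ) → ℝ)
    (hconv : ConvexOn ℝ Set.univ r)
    (hsymm : ∀ (x : Fin n → ℝ) (i : Fin n),
      r (x - (2 * x i) • (Pi.single i 1 : Fin n → ℝ)) = r x)
    (hincr : ∀ (x₀ : Fin n → ℝ), (∀ j, 0 ≤ x₀ j) → ∀ (γ : ℝ), 0 ≤ γ →
      ∀ (i : Fin n), r x₀ ≤ r (x₀ + γ • (Pi.single i 1 : Fin n → ℝ)))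
    (g : (Fin n → ℝ) → (Fin n → ℝ) → ℝ)
    (hg : ∀ y z, g y z = f (y - z) + r (y + z) + ε * (∑ i, (y i + z i)))
    (ystar zstar : Fin n → ℝ)
    (hy : ∀ i, 0 ≤ ystar i) (hz : ∀ i, 0 ≤ zstar i)
    (hmin : ∀ y z : Fin n → ℝ, (∀ i, 0 ≤ y i) → (∀ i, 0 ≤ z i) →
      g ystar zstar ≤ g y z) :
    ∀ i, ystar i * zstar i = 0 := by
  obtain rfl : g = splitObjective f r ε := funext₂ hg
  refine stmt_5_general hε (fun x hx γ hγ i => ?_) hy hz hmin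
  simpa only [← Pi.single_smul, smul_eq_mul, mul_one] using hincr x hx γ hγ i
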